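/- arXiv:2501.10953 — 2 statements merged into one kernel-verified Lean document; each statement's English description precedes it below -/
import Mathlib

section
/- Fix N > 0 and Γ > 0, and let x ∈ ℝ. If Y ~ N(x, N), then the variance of the random variable log( W(Y|x) / Q*(Y) ) equals (Γ² + 2x²N) / (2(N+Γ)²). In particular, if x² is replaced by its average Γ under N(0,Γ), this quantity equals V(Γ) := (Γ² + 2ΓN)/(2(N+Γ)²). -/
open Real MeasureTheory ProbabilityTheory

/-- The AWGN transition density `W(y|x)` with noise variance `N`. -/
noncomputable def W (N x y : ℝ) : ℝ :=
  (2 * π * N) ^ (-(1:ℝ)/2) * Real.exp (-(y - x)^2 / (2 * N))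

/-- The capacity-achieving output density `Q*(y) = N(0, Γ+N)` density. -/
noncomputable def Qstar (N Γ y : ℝ) : ℝ :=
  (2 * π * (Γ + N)) ^ (-(1:ℝ)/2) * Real.exp (-y^2 / (2 * (Γ + N)))

/-!
The logarithm of a ratio of two Gaussian densities is a quadratic polynomial, so its variance under
a Gaussian law only involves the central moments up to order four. These satisfy
`m (n + 2) = (n + 1) * v * m n`: compare the derivatives at `0` of both sides of the differential
equation `φ' t = t * (v * φ t)` of the centred Gaussian moment generating function.
-/

open scoped NNReal

lemma iteratedDeriv_succ_fun_id_mul_zero {𝕜 : Type*} [NontriviallyNormedField 𝕜] {g : 𝕜 → 𝕜}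
    {n : ℕ} (hg : ContDiffAt 𝕜 (n + 1 : ℕ) g 0) :
    iteratedDeriv (n + 1) (fun t ↦ t * g t) 0 = (n + 1) * iteratedDeriv n g 0 := by
  rw [iteratedDeriv_fun_mul contDiffAt_fun_id hg, Finset.sum_eq_single_of_mem 1 (by simp)]
  · simp
  · intro i _ hi
    rcases i with - | - | i
    · simp
    · exact absurd rfl hi
    · simp [iteratedDeriv_fun_id]

lemma deriv_exp_const_mul_sq_div_two (c : ℝ) :
    deriv (fun t ↦ rexp (c * t ^ 2 / 2)) = fun t ↦ t * (c * rexp (c * t ^ 2 / 2)) := by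
  funext t
  have hquad : HasDerivAt (fun t ↦ c * t ^ 2 / 2) (c * t) t := by
    refine (((hasDerivAt_pow 2 t).const_mul c).div_const 2).congr_deriv ?_
    push_cast
    ring
  rw [hquad.exp.deriv]
  ring

section CentredGaussian

variable (v : ℝ≥0)

lemma integral_pow_gaussianReal_zero (n : ℕ) :
    ∫ z, z ^ n ∂gaussianReal 0 v = iteratedDeriv n (fun t ↦ rexp (v * t ^ 2 / 2)) 0 := by
  have hmgf := iteratedDeriv_mgf_zero (X := id) (μ := gaussianReal 0 v)
    (by simp [integrableExpSet_id_gaussianReal]) n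
  simpa [mgf_id_gaussianReal] using hmgf.symm

lemma integral_pow_add_two_gaussianReal_zero (n : ℕ) :
    ∫ z, z ^ (n + 2) ∂gaussianReal 0 v = (n + 1) * v * ∫ z, z ^ n ∂gaussianReal 0 v := by
  rw [integral_pow_gaussianReal_zero, integral_pow_gaussianReal_zero, iteratedDeriv_succ',
    deriv_exp_const_mul_sq_div_two, iteratedDeriv_succ_fun_id_mul_zero (by fun_prop),
    iteratedDeriv_const_mul_field, mul_assoc]

lemma integral_sq_gaussianReal_zero : ∫ z, z ^ 2 ∂gaussianReal 0 v = v := by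
  simpa using integral_pow_add_two_gaussianReal_zero v 0

lemma integral_cube_gaussianReal_zero : ∫ z, z ^ 3 ∂gaussianReal 0 v = 0 := by
  simpa using integral_pow_add_two_gaussianReal_zero v 1

lemma integral_pow_four_gaussianReal_zero : ∫ z, z ^ 4 ∂gaussianReal 0 v = 3 * (v : ℝ) ^ 2 := by
  rw [integral_pow_add_two_gaussianReal_zero v 2, integral_sq_gaussianReal_zero]
  push_cast
  ring

lemma integrable_pow_gaussianReal (μ : ℝ) (n : ℕ) :
    Integrable (fun z ↦ z ^ n) (gaussianReal μ v) :=
  integrable_pow_of_mem_interior_integrableExpSet (X := id)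
    (by simp [integrableExpSet_id_gaussianReal]) n

lemma memLp_two_pow_gaussianReal (μ : ℝ) (n : ℕ) :
    MemLp (fun z ↦ z ^ n) 2 (gaussianReal μ v) := by
  rw [memLp_two_iff_integrable_sq (by fun_prop)]
  simpa only [← pow_mul] using integrable_pow_gaussianReal v μ (n * 2)

lemma variance_sq_gaussianReal_zero : Var[fun z ↦ z ^ 2; gaussianReal 0 v] = 2 * (v : ℝ) ^ 2 := by
  rw [variance_eq_sub (memLp_two_pow_gaussianReal v 0 2)]
  simp only [Pi.pow_apply, ← pow_mul, Nat.reduceMul, integral_pow_four_gaussianReal_zero,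
    integral_sq_gaussianReal_zero]
  ring

lemma covariance_sq_id_gaussianReal_zero :
    cov[fun z ↦ z ^ 2, fun z ↦ z; gaussianReal 0 v] = 0 := by
  rw [covariance_eq_sub (memLp_two_pow_gaussianReal v 0 2)
    (by simpa using memLp_two_pow_gaussianReal v 0 1)]
  simp only [Pi.mul_apply, ← pow_succ, Nat.reduceAdd, integral_cube_gaussianReal_zero,
    integral_id_gaussianReal, mul_zero, sub_zero]

lemma variance_quadratic_gaussianReal_zero (a b c : ℝ) :
    Var[fun z ↦ a * z ^ 2 + b * z + c; gaussianReal 0 v] = 2 * a ^ 2 * v ^ 2 + b ^ 2 * v := by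
  have hsq := (memLp_two_pow_gaussianReal v 0 2).const_mul a
  have hlin : MemLp (fun z ↦ b * z) 2 (gaussianReal 0 v) := by
    simpa using (memLp_two_pow_gaussianReal v 0 1).const_mul b
  rw [variance_add_const (by fun_prop), variance_fun_add hsq hlin, variance_const_mul,
    variance_const_mul, covariance_const_mul_left, covariance_const_mul_right,
    variance_sq_gaussianReal_zero, variance_fun_id_gaussianReal, covariance_sq_id_gaussianReal_zero]
  ring

end CentredGaussian

lemma variance_quadratic_gaussianReal (μ : ℝ) (v : ℝ≥0) (a b c : ℝ) :
    Var[fun y ↦ a * (y - μ) ^ 2 + b * (y - μ) + c; gaussianReal μ v]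
      = 2 * a ^ 2 * v ^ 2 + b ^ 2 * v := by
  have hmap : (gaussianReal μ v).map (· - μ) = gaussianReal 0 v := by
    rw [gaussianReal_map_sub_const, sub_self]
  rw [← variance_quadratic_gaussianReal_zero v a b c, ← hmap,
    variance_map (by fun_prop) (by fun_prop)]
  rfl

section LogLikelihoodRatio

variable (μ m : ℝ) {v w : ℝ≥0}

lemma log_gaussianPDFReal (hv : v ≠ 0) (y : ℝ) :
    log (gaussianPDFReal μ v y) = -log (2 * π * v) / 2 - (y - μ) ^ 2 / (2 * v) := by
  rw [gaussianPDFReal, log_mul (by positivity) (exp_ne_zero _), log_exp, log_inv,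
    log_sqrt (by positivity)]
  ring

lemma log_gaussianPDFReal_div (hv : v ≠ 0) (hw : w ≠ 0) (y : ℝ) :
    log (gaussianPDFReal μ v y / gaussianPDFReal m w y)
      = (1 / w - 1 / v) / 2 * (y - μ) ^ 2 + (μ - m) / w * (y - μ)
        + ((log (2 * π * w) - log (2 * π * v)) / 2 + (μ - m) ^ 2 / (2 * w)) := by
  rw [log_div (gaussianPDFReal_pos μ v y hv).ne' (gaussianPDFReal_pos m w y hw).ne',
    log_gaussianPDFReal μ hv, log_gaussianPDFReal m hw]
  ring

lemma variance_log_gaussianPDFReal_div (hv : v ≠ 0) (hw : w ≠ 0) :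
    Var[fun y ↦ log (gaussianPDFReal μ v y / gaussianPDFReal m w y); gaussianReal μ v]
      = (((w : ℝ) - v) ^ 2 + 2 * (μ - m) ^ 2 * v) / (2 * w ^ 2) := by
  simp only [log_gaussianPDFReal_div μ m hv hw, variance_quadratic_gaussianReal]
  field_simp
  ring

end LogLikelihoodRatio

lemma gaussianPDFReal_eq_rpow_mul_exp (μ : ℝ) (v : ℝ≥0) (y : ℝ) :
    gaussianPDFReal μ v y
      = (2 * π * v) ^ (-(1 : ℝ) / 2) * rexp (-(y - μ) ^ 2 / (2 * v)) := by
  rw [gaussianPDFReal, neg_div 2 (1 : ℝ), rpow_neg (by positivity), sqrt_eq_rpow]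

lemma W_eq_gaussianPDFReal {N : ℝ} (hN : 0 ≤ N) (x y : ℝ) :
    W N x y = gaussianPDFReal x N.toNNReal y := by
  rw [W, gaussianPDFReal_eq_rpow_mul_exp, coe_toNNReal N hN]

lemma Qstar_eq_gaussianPDFReal {N Γ : ℝ} (h : 0 ≤ Γ + N) (y : ℝ) :
    Qstar N Γ y = gaussianPDFReal 0 (Γ + N).toNNReal y := by
  rw [Qstar, gaussianPDFReal_eq_rpow_mul_exp, coe_toNNReal (Γ + N) h, sub_zero]

/-- If `Y ~ N(x, N)`, then
`Var(log (W(Y|x)/Q*(Y))) = (Γ² + 2x²N)/(2(N+Γ)²)`; and replacing `x²` by its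
average `Γ` under `N(0,Γ)` yields `V(Γ) = (Γ² + 2ΓN)/(2(N+Γ)²)`. -/
theorem awgn_information_density_variance (N Γ x : ℝ) (hN : 0 < N) (hΓ : 0 < Γ) :
    variance (fun y => Real.log (W N x y / Qstar N Γ y)) (gaussianReal x N.toNNReal)
        = (Γ^2 + 2 * x^2 * N) / (2 * (N + Γ)^2)
    ∧ ∫ x' : ℝ, (Γ^2 + 2 * x'^2 * N) / (2 * (N + Γ)^2) ∂(gaussianReal 0 Γ.toNNReal)
        = (Γ^2 + 2 * Γ * N) / (2 * (N + Γ)^2) := by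
  constructor
  · have hv : N.toNNReal ≠ 0 := (toNNReal_pos.2 hN).ne'
    have hw : (Γ + N).toNNReal ≠ 0 := (toNNReal_pos.2 (add_pos hΓ hN)).ne'
    simp only [W_eq_gaussianPDFReal hN.le, Qstar_eq_gaussianPDFReal (add_pos hΓ hN).le]
    rw [variance_log_gaussianPDFReal_div x 0 hv hw, coe_toNNReal N hN.le,
      coe_toNNReal (Γ + N) (add_pos hΓ hN).le, add_sub_cancel_right, sub_zero, add_comm N Γ]
  · have hint : Integrable (fun x' : ℝ ↦ 2 * x' ^ 2 * N) (gaussianReal 0 Γ.toNNReal) :=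
      ((integrable_pow_gaussianReal Γ.toNNReal 0 2).const_mul 2).mul_const N
    rw [integral_div, integral_add (integrable_const _) hint, integral_mul_const,
      integral_const_mul, integral_sq_gaussianReal_zero, coe_toNNReal Γ hΓ.le,
      integral_const, probReal_univ, one_smul]
end

section
/- Fix N > 0 and Γ > 0, and let Q*ₙ denote the density of the Gaussian N(0, (Γ+N)·Iₙ) on ℝⁿ. There exist positive constants C, n₀ and Δ₀ such that for all integers n ≥ n₀ and all real Δ with 0 ≤ Δ ≤ Δ₀: for every y ∈ ℝⁿ with Γ + N − Δ ≤ ‖y‖²/n ≤ Γ + N + Δ, one has | log( Q^cc_{Γ,n}(y) / Q*ₙ(y) ) | ≤ C·( log n + n·Δ² ). -/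
open Real MeasureTheory ProbabilityTheory

/-- `UniformSphereFamily N σ`: `σ n R` is, for every `n ≥ 1` and `R > 0`, the unique
rotation-invariant (uniform) Borel probability measure on the sphere of radius `R`
in `ℝⁿ`. -/
def UniformSphereFamily (σ : ∀ n : ℕ, ℝ → Measure (Fin n → ℝ)) : Prop :=
  ∀ (n : ℕ), 1 ≤ n → ∀ R : ℝ, 0 < R →
    IsProbabilityMeasure (σ n R) ∧
    σ n R ({x : Fin n → ℝ | ∑ i, (x i)^2 = R^2})ᶜ = 0 ∧
    ∀ A : Matrix (Fin n) (Fin n) ℝ, A * A.transpose = 1 →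
      (σ n R).map (A.mulVec) = σ n R

/-- `Qcc σ N Γ' n`: the density on `ℝⁿ` of `Y = X + Z`, where `X` is uniform on the
sphere of radius `√(nΓ')` and `Z ~ N(0, N·Iₙ)` is independent of `X`. -/
noncomputable def Qcc (σ : ∀ n : ℕ, ℝ → Measure (Fin n → ℝ)) (N Γ' : ℝ) (n : ℕ)
    (y : Fin n → ℝ) : ℝ :=
  ∫ x, (2 * π * N) ^ (-(n : ℝ)/2) * Real.exp (-(∑ i, (y i - x i)^2) / (2 * N))
    ∂(σ n (Real.sqrt (n * Γ')))

/-!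
For `X` uniform on the sphere of radius `R` in `ℝⁿ`, rotation invariance determines all moments of
a coordinate of `X`, and `E exp ⟪u, X⟫ = ₀F₁(; n/2; ‖u‖² R² / 4)`. The `k`-th term of
`₀F₁(; a; t (a + t))` is `t ^ k / k!` times `(a + t) ^ k / (a)ₖ`, and tangent-line bounds for the
logarithm compare the second factor with its value at the saddle point `k = t`. Averaging these
bounds against the Poisson weights `t ^ k / k!`, whose mean and variance are both `t`, determines
`₀F₁` up to a factor `1 + t / a`, which stays bounded here because `t / a` does. What remains of
`log (Qcc / Q*)` is `n / 2` times an elementary function of `ρ = ‖y‖² / (n (Γ + N))` that vanishes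
to second order at `ρ = 1`.
-/

section Series

open scoped Nat

lemma mul_log_sub_log_le {p q : ℝ} (hp : 0 < p) (hq : 0 < q) :
    p * (log q - log p) ≤ q - p := by
  rw [← log_div hq.ne' hp.ne']
  calc p * log (q / p) ≤ p * (q / p - 1) := by
        gcongr
        exact log_le_sub_one_of_pos (div_pos hq hp)
    _ = q - p := by field_simp

lemma le_log_ascPochhammer_eval {a : ℝ} (ha : 0 < a) (k : ℕ) :
    (a + k - 1) * log (a + k) - (a - 1) * log a - k ≤ log ((ascPochhammer ℝ k).eval a) := by
  induction k with
  | zero => simp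
  | succ k ih =>
    have hak : 0 < a + k := by positivity
    have hstep := mul_log_sub_log_le hak (add_pos hak one_pos)
    rw [ascPochhammer_succ_eval, log_mul (ascPochhammer_pos k a ha).ne' hak.ne', Nat.cast_succ,
      ← add_assoc]
    linarith

lemma log_ascPochhammer_eval_le {a : ℝ} (ha : 0 < a) (k : ℕ) :
    log ((ascPochhammer ℝ k).eval a) ≤ (a + k) * log (a + k) - a * log a - k := by
  induction k with
  | zero => simp
  | succ k ih =>
    have hak : 0 < a + k := by positivity
    have hstep := mul_log_sub_log_le (add_pos hak one_pos) hak
    rw [ascPochhammer_succ_eval, log_mul (ascPochhammer_pos k a ha).ne' hak.ne', Nat.cast_succ,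
      ← add_assoc]
    linarith

lemma pow_div_ascPochhammer_eval_le {a w : ℝ} (ha : 0 < a) (hw : 0 < w) (k : ℕ) :
    w ^ k / (ascPochhammer ℝ k).eval a ≤ (1 + k / a) * exp (a * log (a / w) + w - a) := by
  have hP := ascPochhammer_pos k a ha
  have hak : 0 < a + k := by positivity
  have htangent := mul_log_sub_log_le hak hw
  have hPoch := le_log_ascPochhammer_eval ha k
  rw [← log_le_log_iff (by positivity) (by positivity), log_div (by positivity) hP.ne', log_pow,
    log_mul (by positivity) (exp_pos _).ne', log_exp, one_add_div ha.ne',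
    log_div hak.ne' ha.ne', log_div ha.ne' hw.ne']
  linarith

lemma le_pow_div_ascPochhammer_eval {a w : ℝ} (ha : 0 < a) (hw : 0 < w) (k : ℕ) :
    (1 - (a + k - w) ^ 2 / w) * exp (a * log (a / w) + w - a) ≤
      w ^ k / (ascPochhammer ℝ k).eval a := by
  have hP := ascPochhammer_pos k a ha
  have hak : 0 < a + k := by positivity
  have hPoch := log_ascPochhammer_eval_le ha k
  have htangent : (a + k) * (log (a + k) - log w) ≤ (a + k - w) + (a + k - w) ^ 2 / w := by
    rw [← log_div hak.ne' hw.ne']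
    calc (a + k) * log ((a + k) / w) ≤ (a + k) * ((a + k) / w - 1) := by
          gcongr
          exact log_le_sub_one_of_pos (div_pos hak hw)
      _ = (a + k - w) + (a + k - w) ^ 2 / w := by field_simp; ring
  calc (1 - (a + k - w) ^ 2 / w) * exp (a * log (a / w) + w - a)
      ≤ exp (-((a + k - w) ^ 2 / w)) * exp (a * log (a / w) + w - a) := by
        gcongr
        exact one_sub_le_exp_neg _
    _ = exp (-((a + k - w) ^ 2 / w) + (a * log (a / w) + w - a)) := (exp_add _ _).symm
    _ ≤ exp (log (w ^ k / (ascPochhammer ℝ k).eval a)) := by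
        gcongr
        rw [log_div (by positivity) hP.ne', log_pow, log_div ha.ne' hw.ne']
        linarith
    _ = w ^ k / (ascPochhammer ℝ k).eval a := exp_log (by positivity)

lemma hasSum_descFactorial_mul_pow_div_factorial (m : ℕ) (x : ℝ) :
    HasSum (fun k : ℕ => k.descFactorial m * (x ^ k / k !)) (x ^ m * exp x) := by
  have hvanish : ∑ k ∈ Finset.range m, (k.descFactorial m : ℝ) * (x ^ k / k !) = 0 :=
    Finset.sum_eq_zero fun k hk => by
      simp [Nat.descFactorial_of_lt (Finset.mem_range.mp hk)]
  have hshift (k : ℕ) :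
      ((k + m).descFactorial m : ℝ) * (x ^ (k + m) / (k + m)!) = x ^ m * (x ^ k / k !) := by
    have hfac := Nat.factorial_mul_descFactorial (Nat.le_add_left m k)
    rw [Nat.add_sub_cancel] at hfac
    have hne : ((k + m).descFactorial m : ℝ) ≠ 0 := by
      exact_mod_cast (Nat.descFactorial_pos.mpr (Nat.le_add_left m k)).ne'
    rw [← hfac, Nat.cast_mul]
    field_simp
    ring
  rw [← hasSum_nat_add_iff' m, hvanish, sub_zero, exp_eq_exp_ℝ]
  simp_rw [hshift]
  exact (NormedSpace.expSeries_div_hasSum_exp x).mul_left _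

lemma hasSum_sub_sq_mul_pow_div_factorial (x : ℝ) :
    HasSum (fun k : ℕ => ((k : ℝ) - x) ^ 2 * (x ^ k / k !)) (x * exp x) := by
  have h0 := hasSum_descFactorial_mul_pow_div_factorial 0 x
  have h1 := hasSum_descFactorial_mul_pow_div_factorial 1 x
  have h2 := hasSum_descFactorial_mul_pow_div_factorial 2 x
  convert (h2.add (h1.mul_left (1 - 2 * x))).add (h0.mul_left (x ^ 2)) using 1
  · ext k
    rw [Nat.cast_descFactorial_two, Nat.descFactorial_one, Nat.descFactorial_zero, Nat.cast_one]
    ring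
  · ring

/-- The confluent hypergeometric limit function `₀F₁(; a; z)`, which up to elementary factors is
the modified Bessel function `I_{a-1}(2√z)`. -/
noncomputable def zeroFOne (a z : ℝ) : ℝ :=
  ∑' k : ℕ, z ^ k / (k ! * (ascPochhammer ℝ k).eval a)

lemma summable_zeroFOne {a z : ℝ} (ha : 0 < a) (hz : 0 ≤ z) :
    Summable fun k : ℕ => z ^ k / (k ! * (ascPochhammer ℝ k).eval a) := by
  have hpow (k : ℕ) : a ^ k ≤ (ascPochhammer ℝ k).eval a := by
    induction k with
    | zero => simp
    | succ k ih =>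
      rw [ascPochhammer_succ_eval, pow_succ]
      exact mul_le_mul ih (le_add_of_nonneg_right k.cast_nonneg) ha.le (ascPochhammer_pos k a ha).le
  refine .of_nonneg_of_le (fun k => ?_) (fun k => ?_) (summable_pow_div_factorial (z / a))
  · have := ascPochhammer_pos k a ha
    positivity
  · rw [div_pow, div_div, mul_comm]
    gcongr
    exact hpow k

lemma zeroFOne_pos {a z : ℝ} (ha : 0 < a) (hz : 0 ≤ z) : 0 < zeroFOne a z := by
  refine (summable_zeroFOne ha hz).tsum_pos (fun k => ?_) 0 (by simp)
  have := ascPochhammer_pos k a ha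
  positivity

section Saddle

variable {a t : ℝ}

lemma zeroFOne_le (ha : 0 < a) (ht : 0 ≤ t) :
    zeroFOne a (t * (a + t)) ≤ (1 + t / a) * exp (a * log (a / (a + t)) + 2 * t) := by
  set c := exp (a * log (a / (a + t)) + (a + t) - a) with hc
  have hmajorant : HasSum (fun k : ℕ => t ^ k / k ! * ((1 + k / a) * c))
      ((t ^ 0 * exp t + t ^ 1 * exp t / a) * c) := by
    refine (((hasSum_descFactorial_mul_pow_div_factorial 0 t).add
      ((hasSum_descFactorial_mul_pow_div_factorial 1 t).div_const a)).mul_right c).congr_fun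
      fun k => ?_
    rw [Nat.descFactorial_zero, Nat.descFactorial_one, Nat.cast_one]
    ring
  calc zeroFOne a (t * (a + t)) ≤ (t ^ 0 * exp t + t ^ 1 * exp t / a) * c := by
        refine hasSum_le (fun k => ?_) (summable_zeroFOne ha (by positivity)).hasSum hmajorant
        rw [mul_pow, mul_div_mul_comm]
        gcongr
        exact pow_div_ascPochhammer_eval_le ha (by positivity) k
    _ = (1 + t / a) * (exp t * c) := by ring
    _ = (1 + t / a) * exp (a * log (a / (a + t)) + 2 * t) := by
        rw [hc, ← exp_add]; ring_nf

lemma le_zeroFOne (ha : 0 < a) (ht : 0 ≤ t) :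
    (1 + t / a)⁻¹ * exp (a * log (a / (a + t)) + 2 * t) ≤ zeroFOne a (t * (a + t)) := by
  set c := exp (a * log (a / (a + t)) + (a + t) - a) with hc
  have hminorant : HasSum (fun k : ℕ => t ^ k / k ! * ((1 - (a + k - (a + t)) ^ 2 / (a + t)) * c))
      ((t ^ 0 * exp t - t * exp t / (a + t)) * c) := by
    refine (((hasSum_descFactorial_mul_pow_div_factorial 0 t).sub
      ((hasSum_sub_sq_mul_pow_div_factorial t).div_const (a + t))).mul_right c).congr_fun
      fun k => ?_
    rw [Nat.descFactorial_zero, Nat.cast_one]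
    ring
  calc (1 + t / a)⁻¹ * exp (a * log (a / (a + t)) + 2 * t)
      = (1 + t / a)⁻¹ * (exp t * c) := by rw [hc, ← exp_add]; ring_nf
    _ = (t ^ 0 * exp t - t * exp t / (a + t)) * c := by field_simp; ring
    _ ≤ zeroFOne a (t * (a + t)) := by
        refine hasSum_le (fun k => ?_) hminorant (summable_zeroFOne ha (by positivity)).hasSum
        rw [mul_pow, mul_div_mul_comm]
        gcongr
        exact le_pow_div_ascPochhammer_eval ha (by positivity) k

lemma abs_log_zeroFOne_sub_le (ha : 0 < a) (ht : 0 ≤ t) :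
    |log (zeroFOne a (t * (a + t))) - (a * log (a / (a + t)) + 2 * t)| ≤ log (1 + t / a) := by
  have hlower := log_le_log (by positivity) (le_zeroFOne ha ht)
  have hupper := log_le_log (zeroFOne_pos ha (by positivity)) (zeroFOne_le ha ht)
  rw [log_mul (by positivity) (exp_pos _).ne', log_exp] at hlower hupper
  rw [log_inv] at hlower
  rw [abs_le]
  constructor <;> linarith

end Saddle

end Series

section Sphere

open Matrix Polynomial
open scoped Nat

lemma choose_mul_integral_pow_mul_pow {α : Type*} [MeasurableSpace α] {μ : Measure α}
    {f g : α → ℝ} {m : ℕ} {p : ℝ[X]}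
    (hint : ∀ l, Integrable (fun x => f x ^ (m - l) * g x ^ l) μ)
    (hp : ∀ τ : ℝ, ∫ x, (f x + τ * g x) ^ m ∂μ = p.eval τ) (l : ℕ) :
    m.choose l * ∫ x, f x ^ (m - l) * g x ^ l ∂μ = p.coeff l := by
  have hexpand : p = ∑ l ∈ Finset.range (m + 1),
      C (m.choose l * ∫ x, f x ^ (m - l) * g x ^ l ∂μ) * X ^ l := by
    refine Polynomial.funext fun τ => ?_
    simp_rw [← hp, add_comm (f _), add_pow, eval_finsetSum, eval_C_mul, eval_pow, eval_X,
      ← integral_const_mul, ← integral_mul_const]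
    rw [← integral_finsetSum _ fun l _ => ((hint l).const_mul _).mul_const _]
    refine integral_congr_ae (.of_forall fun x => Finset.sum_congr rfl fun l _ => ?_)
    ring
  rw [hexpand, finsetSum_coeff]
  simp only [coeff_C_mul, coeff_X_pow, mul_ite, mul_one, mul_zero, Finset.sum_ite_eq,
    Finset.mem_range]
  split_ifs with hl
  · rfl
  · rw [Nat.choose_eq_zero_of_lt (by lia), Nat.cast_zero, zero_mul]

lemma coeff_two_one_add_X_sq_pow {S : Type*} [CommSemiring S] (k : ℕ) :
    ((1 + X ^ 2 : S[X]) ^ k).coeff 2 = k := by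
  have hexpand : (1 + X ^ 2 : S[X]) ^ k = expand S 2 ((1 + X) ^ k) := by simp
  rw [hexpand, coeff_expand two_pos, if_pos dvd_rfl, Nat.div_self two_pos, coeff_one_add_X_pow,
    Nat.choose_one_right]

variable {ι : Type*} [Fintype ι] [DecidableEq ι]

lemma exists_orthogonal_mulVec_eq {u v : ι → ℝ} (h : u ⬝ᵥ u = v ⬝ᵥ v) :
    ∃ A : Matrix ι ι ℝ, A * Aᵀ = 1 ∧ A *ᵥ u = v := by
  have hnorm : ‖WithLp.toLp 2 u‖ = ‖WithLp.toLp 2 v‖ := by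
    simpa [EuclideanSpace.norm_eq, dotProduct, ← sq] using congrArg Real.sqrt h
  let f := (ℝ ∙ (WithLp.toLp 2 u - WithLp.toLp 2 v))ᗮ.reflection
  let b := EuclideanSpace.basisFun ι ℝ
  refine ⟨f.toMatrix b.toBasis b.toBasis,
    Matrix.mem_unitaryGroup_iff.mp (f.toMatrix_mem_unitaryGroup b b), ?_⟩
  have hrepr := LinearMap.toMatrix_mulVec_repr b.toBasis b.toBasis f.toLinearMap (WithLp.toLp 2 u)
  have hreflect : f (WithLp.toLp 2 u) = WithLp.toLp 2 v := Submodule.reflection_sub hnorm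
  simpa [b, hreflect] using! hrepr

/-- `μ` is the rotation-invariant probability measure on the Euclidean sphere of radius `|R|` about
the origin of `ℝ^ι`. -/
structure IsUniformOnSphere (μ : Measure (ι → ℝ)) (R : ℝ) : Prop where
  isProbabilityMeasure : IsProbabilityMeasure μ
  ae_sum_sq_eq : ∀ᵐ x ∂μ, ∑ i, x i ^ 2 = R ^ 2
  map_mulVec : ∀ A : Matrix ι ι ℝ, A * Aᵀ = 1 → μ.map (A *ᵥ ·) = μ

namespace IsUniformOnSphere

variable {μ : Measure (ι → ℝ)} {R : ℝ}

lemma integrable (hμ : IsUniformOnSphere μ R) {f : (ι → ℝ) → ℝ} (hf : Continuous f) :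
    Integrable f μ := by
  have := hμ.isProbabilityMeasure
  obtain ⟨C, hC⟩ := (isCompact_closedBall (0 : ι → ℝ) |R|).exists_bound_of_continuousOn
    hf.continuousOn
  refine .of_bound hf.aestronglyMeasurable C ?_
  filter_upwards [hμ.ae_sum_sq_eq] with x hx
  refine hC x ?_
  rw [mem_closedBall_zero_iff, pi_norm_le_iff_of_nonneg (abs_nonneg R)]
  refine fun i => sq_le_sq.mp ?_
  rw [← hx]
  exact Finset.single_le_sum (f := fun j => x j ^ 2) (fun j _ => sq_nonneg _) (Finset.mem_univ i)

lemma integral_comp_dotProduct_congr (hμ : IsUniformOnSphere μ R) {f : ℝ → ℝ} (hf : Continuous f)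
    {u v : ι → ℝ} (h : u ⬝ᵥ u = v ⬝ᵥ v) :
    ∫ x, f (u ⬝ᵥ x) ∂μ = ∫ x, f (v ⬝ᵥ x) ∂μ := by
  obtain ⟨A, hA, rfl⟩ := exists_orthogonal_mulVec_eq h
  have hadjoint (x : ι → ℝ) : (A *ᵥ u) ⬝ᵥ (A *ᵥ x) = u ⬝ᵥ x := by
    rw [dotProduct_mulVec, ← mulVec_transpose, mulVec_mulVec, mul_eq_one_comm.mp hA, one_mulVec]
  have hmap : ∫ x, f ((A *ᵥ u) ⬝ᵥ x) ∂(μ.map (A *ᵥ ·)) = ∫ x, f ((A *ᵥ u) ⬝ᵥ (A *ᵥ x)) ∂μ :=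
    integral_map (by fun_prop)
      (Continuous.aestronglyMeasurable (by unfold dotProduct; fun_prop))
  rw [hμ.map_mulVec A hA] at hmap
  simpa only [hadjoint] using hmap.symm

lemma integral_dotProduct_pow (hμ : IsUniformOnSphere μ R) (u : ι → ℝ) (i : ι) (k : ℕ) :
    ∫ x, (u ⬝ᵥ x) ^ (2 * k) ∂μ = (u ⬝ᵥ u) ^ k * ∫ x, x i ^ (2 * k) ∂μ := by
  have hu : 0 ≤ u ⬝ᵥ u := Finset.sum_nonneg fun i _ => mul_self_nonneg (u i)
  rw [hμ.integral_comp_dotProduct_congr (continuous_pow (2 * k))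
    (v := Pi.single i √(u ⬝ᵥ u)) (by simp [Real.mul_self_sqrt hu])]
  simp only [single_dotProduct, mul_pow]
  rw [integral_const_mul, pow_mul, Real.sq_sqrt hu]

lemma integral_pow_mul_sq (hμ : IsUniformOnSphere μ R) {i j : ι} (hij : i ≠ j) (k : ℕ) :
    (2 * k + 1) * ∫ x, x i ^ (2 * k) * x j ^ 2 ∂μ = ∫ x, x i ^ (2 * (k + 1)) ∂μ := by
  set m := ∫ x, x i ^ (2 * (k + 1)) ∂μ
  have hrotate (τ : ℝ) : ∫ x, (x i + τ * x j) ^ (2 * (k + 1)) ∂μ =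
      ((1 + X ^ 2) ^ (k + 1) * C m : ℝ[X]).eval τ := by
    have h := hμ.integral_dotProduct_pow (Pi.single i 1 + Pi.single j τ) i (k + 1)
    simpa [add_dotProduct, dotProduct_add, hij, hij.symm, sq] using h
  have hcoeff := choose_mul_integral_pow_mul_pow
    (fun l => hμ.integrable (by fun_prop)) hrotate 2
  rw [coeff_mul_C, coeff_two_one_add_X_sq_pow, Nat.cast_choose_two, mul_add_one 2 k,
    Nat.add_sub_cancel] at hcoeff
  push_cast at hcoeff
  have hk : (k + 1 : ℝ) ≠ 0 := by positivity
  apply mul_left_cancel₀ hk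
  linarith

lemma card_add_mul_integral_pow_succ (hμ : IsUniformOnSphere μ R) (i : ι) (k : ℕ) :
    (Fintype.card ι + 2 * k) * ∫ x, x i ^ (2 * (k + 1)) ∂μ =
      (2 * k + 1) * R ^ 2 * ∫ x, x i ^ (2 * k) ∂μ := by
  set m := ∫ x, x i ^ (2 * (k + 1)) ∂μ with hm
  have hmixed (j : ι) : (2 * k + 1) * ∫ x, x i ^ (2 * k) * x j ^ 2 ∂μ =
      m + if i = j then 2 * k * m else 0 := by
    split_ifs with hij
    · simp_rw [← hij, ← pow_add, ← mul_add_one 2 k, ← hm]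
      ring
    · rw [hμ.integral_pow_mul_sq hij, add_zero]
  calc (Fintype.card ι + 2 * k) * m
      = ∑ j, (m + if i = j then 2 * k * m else 0) := by
        simp [Finset.sum_add_distrib, add_mul]
    _ = (2 * k + 1) * ∫ x, ∑ j, x i ^ (2 * k) * x j ^ 2 ∂μ := by
        rw [integral_finsetSum _ fun j _ => hμ.integrable (by fun_prop), Finset.mul_sum]
        exact Finset.sum_congr rfl fun j _ => (hmixed j).symm
    _ = (2 * k + 1) * ∫ x, R ^ 2 * x i ^ (2 * k) ∂μ := by
        congr 1
        refine integral_congr_ae ?_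
        filter_upwards [hμ.ae_sum_sq_eq] with x hx
        rw [← Finset.mul_sum, hx, mul_comm]
    _ = (2 * k + 1) * R ^ 2 * ∫ x, x i ^ (2 * k) ∂μ := by
        rw [integral_const_mul, mul_assoc]

lemma integral_pow_div_factorial (hμ : IsUniformOnSphere μ R) (i : ι) (k : ℕ) :
    (∫ x, x i ^ (2 * k) ∂μ) / (2 * k)! =
      (R ^ 2 / 4) ^ k / (k ! * (ascPochhammer ℝ k).eval (Fintype.card ι / 2 : ℝ)) := by
  have := hμ.isProbabilityMeasure
  have hcard : (0 : ℝ) < Fintype.card ι := by exact_mod_cast Fintype.card_pos_iff.mpr ⟨i⟩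
  induction k with
  | zero => simp
  | succ k ih =>
    have hrec := hμ.card_add_mul_integral_pow_succ i k
    have hP := ascPochhammer_pos k _ (half_pos hcard)
    have hcard_k : (0 : ℝ) < Fintype.card ι + 2 * k := by positivity
    rw [div_eq_div_iff (by positivity) (by positivity)] at ih
    rw [ascPochhammer_succ_eval, mul_add_one 2 k, Nat.factorial_succ, Nat.factorial_succ,
      Nat.factorial_succ, ← mul_add_one 2 k, div_eq_div_iff (by positivity) (by positivity),
      pow_succ]
    push_cast
    linear_combination (k + 1 : ℝ) * k ! * (ascPochhammer ℝ k).eval (Fintype.card ι / 2 : ℝ) / 2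
      * hrec + (2 * k + 1 : ℝ) * R ^ 2 * (k + 1) / 2 * ih

lemma integral_cosh_dotProduct [Nonempty ι] (hμ : IsUniformOnSphere μ R) (u : ι → ℝ) :
    ∫ x, cosh (u ⬝ᵥ x) ∂μ = zeroFOne (Fintype.card ι / 2) ((u ⬝ᵥ u) * (R ^ 2 / 4)) := by
  have hcard : (0 : ℝ) < Fintype.card ι := by exact_mod_cast Fintype.card_pos
  have hu : 0 ≤ u ⬝ᵥ u := Finset.sum_nonneg fun i _ => mul_self_nonneg (u i)
  have hterm (k : ℕ) : ∫ x, (u ⬝ᵥ x) ^ (2 * k) / (2 * k)! ∂μ = ((u ⬝ᵥ u) * (R ^ 2 / 4)) ^ k /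
      (k ! * (ascPochhammer ℝ k).eval (Fintype.card ι / 2 : ℝ)) := by
    rw [integral_div, hμ.integral_dotProduct_pow u (Classical.arbitrary ι), mul_div_assoc,
      hμ.integral_pow_div_factorial, mul_pow, mul_div_assoc]
  -- The even powers are nonnegative, so termwise integration only needs the moments to be summable.
  have hnorm (k : ℕ) (x : ι → ℝ) :
      ‖(u ⬝ᵥ x) ^ (2 * k) / (2 * k)!‖ = (u ⬝ᵥ x) ^ (2 * k) / (2 * k)! :=
    Real.norm_of_nonneg (div_nonneg ((even_two_mul k).pow_nonneg _) (Nat.cast_nonneg _))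
  have hsum := hasSum_integral_of_summable_integral_norm (μ := μ)
    (F := fun (k : ℕ) x => (u ⬝ᵥ x) ^ (2 * k) / (2 * k)!)
    (fun k => hμ.integrable (by unfold dotProduct; fun_prop))
    (by simpa only [hnorm, hterm] using summable_zeroFOne (half_pos hcard) (by positivity))
  simp only [hterm, (Real.hasSum_cosh _).tsum_eq] at hsum
  exact hsum.tsum_eq.symm

lemma integral_exp_dotProduct [Nonempty ι] (hμ : IsUniformOnSphere μ R) (u : ι → ℝ) :
    ∫ x, exp (u ⬝ᵥ x) ∂μ = zeroFOne (Fintype.card ι / 2) ((u ⬝ᵥ u) * (R ^ 2 / 4)) := by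
  have hexp (v : ι → ℝ) : Integrable (fun x => exp (v ⬝ᵥ x)) μ :=
    hμ.integrable (by unfold dotProduct; fun_prop)
  have hneg : ∫ x, exp ((-u) ⬝ᵥ x) ∂μ = ∫ x, exp (u ⬝ᵥ x) ∂μ :=
    hμ.integral_comp_dotProduct_congr continuous_exp (by simp)
  have hcosh : ∫ x, cosh (u ⬝ᵥ x) ∂μ = ∫ x, exp (u ⬝ᵥ x) ∂μ := by
    simp_rw [Real.cosh_eq, ← neg_dotProduct]
    rw [integral_div, integral_add (hexp _) (hexp _), hneg, add_self_div_two]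
  rw [← hcosh, hμ.integral_cosh_dotProduct]

end IsUniformOnSphere

end Sphere

section Exponent

lemma exists_nonneg_mul_one_add_eq {c : ℝ} (hc : 0 ≤ c) : ∃ x : ℝ, 0 ≤ x ∧ x * (1 + x) = c := by
  have hsq : √(1 + 4 * c) ^ 2 = 1 + 4 * c := Real.sq_sqrt (by linarith)
  have hone : 1 ≤ √(1 + 4 * c) := Real.one_le_sqrt.mpr (by linarith)
  exact ⟨(√(1 + 4 * c) - 1) / 2, by linarith, by linarith⟩

variable {γ θ ρ : ℝ}

lemma log_one_add_div_add_sub_nonpos (hγ : 0 ≤ γ) (hθ : 0 ≤ θ)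
    (h : θ * (1 + θ) = ρ * (γ * (1 + γ))) :
    log ((1 + γ) / (1 + θ)) + 2 * θ - γ - ρ * γ ≤ 0 := by
  have hlog := log_le_sub_one_of_pos (show 0 < (1 + γ) / (1 + θ) by positivity)
  have hgap : (1 + γ) / (1 + θ) - 1 + 2 * θ - γ - ρ * γ =
      -(θ * (θ - γ) ^ 2 / ((1 + θ) * (1 + γ))) := by
    field_simp
    linear_combination (1 + θ) * h
  have hsq : 0 ≤ θ * (θ - γ) ^ 2 / ((1 + θ) * (1 + γ)) := by positivity
  linarith

lemma neg_sq_div_le_log_one_add_div_add_sub (hγ : 0 ≤ γ) (hθ : 0 ≤ θ)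
    (h : θ * (1 + θ) = ρ * (γ * (1 + γ))) :
    -((θ - γ) ^ 2 / (1 + γ)) ≤ log ((1 + γ) / (1 + θ)) + 2 * θ - γ - ρ * γ := by
  have hlog := one_sub_inv_le_log_of_pos (show 0 < (1 + γ) / (1 + θ) by positivity)
  have hgap : 1 - ((1 + γ) / (1 + θ))⁻¹ + 2 * θ - γ - ρ * γ = -((θ - γ) ^ 2 / (1 + γ)) := by
    field_simp
    linear_combination h
  linarith

lemma abs_sub_le_of_mul_one_add_eq (hγ : 0 ≤ γ) (hθ : 0 ≤ θ)
    (h : θ * (1 + θ) = ρ * (γ * (1 + γ))) : |θ - γ| ≤ γ * |ρ - 1| := by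
  have hfactor : (θ - γ) * (1 + θ + γ) = γ * (ρ - 1) * (1 + γ) := by linear_combination h
  have habs := congrArg abs hfactor
  rw [abs_mul, abs_mul, abs_mul, abs_of_nonneg hγ, abs_of_nonneg (by linarith : 0 ≤ 1 + θ + γ),
    abs_of_nonneg (by linarith : 0 ≤ 1 + γ)] at habs
  refine le_of_mul_le_mul_right ?_ (by linarith : 0 < 1 + γ)
  rw [← habs]
  gcongr
  linarith

lemma abs_log_one_add_div_add_sub_le (hγ : 0 ≤ γ) (hθ : 0 ≤ θ)
    (h : θ * (1 + θ) = ρ * (γ * (1 + γ))) :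
    |log ((1 + γ) / (1 + θ)) + 2 * θ - γ - ρ * γ| ≤ γ * (ρ - 1) ^ 2 := by
  have hquad : (θ - γ) ^ 2 / (1 + γ) ≤ γ * (ρ - 1) ^ 2 := by
    rw [div_le_iff₀ (by positivity)]
    calc (θ - γ) ^ 2 ≤ (γ * |ρ - 1|) ^ 2 :=
          sq_le_sq' (neg_le_of_abs_le (abs_sub_le_of_mul_one_add_eq hγ hθ h))
            (le_of_abs_le (abs_sub_le_of_mul_one_add_eq hγ hθ h))
      _ = γ * (ρ - 1) ^ 2 * γ := by rw [mul_pow, sq_abs]; ring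
      _ ≤ γ * (ρ - 1) ^ 2 * (1 + γ) := by gcongr; linarith
  rw [abs_of_nonpos (log_one_add_div_add_sub_nonpos hγ hθ h)]
  linarith [neg_sq_div_le_log_one_add_div_add_sub hγ hθ h]

lemma abs_mul_add_log_zeroFOne_le {a : ℝ} (ha : 1 / 2 ≤ a) (hγ : 0 ≤ γ) (hρ : 0 ≤ ρ) :
    |a * (log (1 + γ) - γ - ρ * γ) + log (zeroFOne a (a ^ 2 * (ρ * (γ * (1 + γ)))))| ≤
      2 * γ * (1 + 2 * a * (ρ - 1) ^ 2) := by
  have ha0 : 0 < a := by linarith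
  obtain ⟨θ, hθ, h⟩ := exists_nonneg_mul_one_add_eq (c := ρ * (γ * (1 + γ))) (by positivity)
  have hz : a ^ 2 * (ρ * (γ * (1 + γ))) = a * θ * (a + a * θ) := by rw [← h]; ring
  rw [hz]
  set Φ := zeroFOne a (a * θ * (a + a * θ))
  set E := log ((1 + γ) / (1 + θ)) + 2 * θ - γ - ρ * γ with hE
  have hsaddle : |log Φ - (a * log (a / (a + a * θ)) + 2 * (a * θ))| ≤ log (1 + θ) := by
    simpa only [mul_div_cancel_left₀ θ ha0.ne'] using
      abs_log_zeroFOne_sub_le ha0 (mul_nonneg ha0.le hθ)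
  have hsplit : a * (log (1 + γ) - γ - ρ * γ) + log Φ =
      a * E + (log Φ - (a * log (a / (a + a * θ)) + 2 * (a * θ))) := by
    rw [hE, ← mul_one_add a θ, div_mul_cancel_left₀ ha0.ne', log_inv,
      log_div (by positivity) (by positivity)]
    ring
  have hθ_le : θ ≤ γ + γ * |ρ - 1| := by
    linarith [le_abs_self (θ - γ), abs_sub_le_of_mul_one_add_eq hγ hθ h]
  calc _ ≤ |a * E| + |log Φ - (a * log (a / (a + a * θ)) + 2 * (a * θ))| := by
        rw [hsplit]; exact abs_add_le _ _
    _ ≤ a * (γ * (ρ - 1) ^ 2) + log (1 + θ) := by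
        rw [abs_mul, abs_of_pos ha0]
        gcongr
        exact abs_log_one_add_div_add_sub_le hγ hθ h
    _ ≤ a * (γ * (ρ - 1) ^ 2) + (γ + γ * |ρ - 1|) := by
        linarith [log_le_sub_one_of_pos (by positivity : 0 < 1 + θ)]
    _ = γ * (1 + |ρ - 1| + a * |ρ - 1| ^ 2) := by rw [sq_abs]; ring
    _ ≤ γ * (2 * (1 + 2 * a * |ρ - 1| ^ 2)) := by
        gcongr
        nlinarith [sq_nonneg (|ρ - 1| - 1)]
    _ = 2 * γ * (1 + 2 * a * (ρ - 1) ^ 2) := by rw [sq_abs]; ring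

end Exponent

section Density

variable {N Γ : ℝ} {σ : ∀ n : ℕ, ℝ → Measure (Fin n → ℝ)} {n : ℕ}

lemma UniformSphereFamily.isUniformOnSphere (hσ : UniformSphereFamily σ) (hn : 1 ≤ n) {R : ℝ}
    (hR : 0 < R) : IsUniformOnSphere (σ n R) R :=
  let ⟨hprob, hsupp, hinv⟩ := hσ n hn R hR
  ⟨hprob, hsupp, hinv⟩

open Matrix in
lemma Qcc_eq (hN : 0 < N) (hΓ : 0 < Γ) (hσ : UniformSphereFamily σ) (hn : 1 ≤ n)
    (y : Fin n → ℝ) :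
    Qcc σ N Γ n y = (2 * π * N) ^ (-(n : ℝ) / 2) * (exp (-(∑ i, y i ^ 2 + n * Γ) / (2 * N)) *
      zeroFOne (n / 2) (n * Γ * (∑ i, y i ^ 2) / (4 * N ^ 2))) := by
  have hn0 : (0 : ℝ) < n := by exact_mod_cast hn
  have : NeZero n := ⟨by lia⟩
  have hμ := hσ.isUniformOnSphere hn (Real.sqrt_pos.mpr (mul_pos hn0 hΓ))
  have hmgf := hμ.integral_exp_dotProduct (N⁻¹ • y)
  have hyy : y ⬝ᵥ y = ∑ i, y i ^ 2 := by simp only [dotProduct, sq]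
  have hz : (N⁻¹ • y) ⬝ᵥ (N⁻¹ • y) * (√(n * Γ) ^ 2 / 4) =
      n * Γ * (∑ i, y i ^ 2) / (4 * N ^ 2) := by
    rw [smul_dotProduct, dotProduct_smul, hyy, Real.sq_sqrt (by positivity), smul_eq_mul,
      smul_eq_mul]
    field_simp
  rw [hz, Fintype.card_fin] at hmgf
  rw [← hmgf, Qcc, ← integral_const_mul, ← integral_const_mul]
  refine integral_congr_ae ?_
  filter_upwards [hμ.ae_sum_sq_eq] with x hx
  rw [Real.sq_sqrt (by positivity)] at hx
  have hpolar : ∑ i, (y i - x i) ^ 2 = ∑ i, y i ^ 2 + n * Γ - 2 * (y ⬝ᵥ x) := by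
    simp_rw [sub_sq, Finset.sum_add_distrib, Finset.sum_sub_distrib, hx, mul_assoc,
      ← Finset.mul_sum, dotProduct]
    ring
  rw [← exp_add, hpolar, smul_dotProduct, smul_eq_mul]
  congr 2
  field_simp
  ring

lemma log_rpow_mul_exp_mul_div {A B r v w Φ : ℝ} (hA : 0 < A) (hB : 0 < B) (hΦ : 0 < Φ) :
    log (A ^ r * (exp v * Φ) / (B ^ r * exp w)) = r * log (A / B) + (v - w) + log Φ := by
  rw [log_div (by positivity) (by positivity), log_mul (by positivity) (by positivity),
    log_mul (by positivity) hΦ.ne', log_mul (by positivity) (by positivity), log_exp, log_exp,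
    log_rpow hA, log_rpow hB, log_div hA.ne' hB.ne']
  ring

end Density

theorem log_ratio_Qcc_Qstar_bound_general {N Γ : ℝ} (hN : 0 < N) (hΓ : 0 < Γ)
    {σ : ∀ n : ℕ, ℝ → Measure (Fin n → ℝ)} (hσ : UniformSphereFamily σ) {n : ℕ} (hn : 1 ≤ n)
    (y : Fin n → ℝ) :
    |log (Qcc σ N Γ n y /
        ((2 * π * (Γ + N)) ^ (-(n : ℝ) / 2) * exp (-(∑ i, y i ^ 2) / (2 * (Γ + N)))))| ≤
      2 * (Γ / N) * (1 + n * (((∑ i, y i ^ 2) / n - (Γ + N)) / (Γ + N)) ^ 2) := by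
  have hn1 : (1 : ℝ) ≤ n := by exact_mod_cast hn
  have hn0 : (0 : ℝ) < n := by linarith
  have hs : 0 < Γ + N := by positivity
  set T := ∑ i, y i ^ 2 with hT
  have hT0 : 0 ≤ T := Finset.sum_nonneg fun i _ => sq_nonneg (y i)
  set ρ := T / n / (Γ + N) with hρ
  have hz : n * Γ * T / (4 * N ^ 2) = (n / 2 : ℝ) ^ 2 * (ρ * (Γ / N * (1 + Γ / N))) := by
    rw [hρ]; field_simp; ring
  have hexponents : -(T + n * Γ) / (2 * N) - -T / (2 * (Γ + N)) =
      n / 2 * (-(Γ / N) - ρ * (Γ / N)) := by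
    rw [hρ]; field_simp; ring
  have hratio : log (2 * π * N / (2 * π * (Γ + N))) = -log (1 + Γ / N) := by
    rw [mul_div_mul_left _ _ (by positivity), ← log_inv, one_add_div hN.ne', inv_div, add_comm]
  have hdev : (T / n - (Γ + N)) / (Γ + N) = ρ - 1 := by rw [hρ, sub_div, div_self hs.ne']
  have hbound := abs_mul_add_log_zeroFOne_le (a := n / 2) (γ := Γ / N) (ρ := ρ)
    (by linarith) (by positivity) (by positivity)
  rw [Qcc_eq hN hΓ hσ hn, ← hT, hz, log_rpow_mul_exp_mul_div (by positivity) (by positivity)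
    (zeroFOne_pos (by positivity) (by positivity)), hratio, hexponents, hdev]
  convert hbound using 2 <;> ring

/-- uniform `O(log n + nΔ²)` bound on `|log(Q^cc_{Γ,n}(y)/Q*ₙ(y))|`,
where `Q*ₙ` is the density of `N(0,(Γ+N)·Iₙ)`, over the typical set
`{y : Γ+N−Δ ≤ ‖y‖²/n ≤ Γ+N+Δ}`. -/
theorem log_ratio_Qcc_Qstar_bound (N Γ : ℝ) (hN : 0 < N) (hΓ : 0 < Γ)
    (σ : ∀ n : ℕ, ℝ → Measure (Fin n → ℝ)) (hσ : UniformSphereFamily σ) :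
    ∃ (C : ℝ) (n₀ : ℕ) (Δ₀ : ℝ), 0 < C ∧ 0 < n₀ ∧ 0 < Δ₀ ∧
      ∀ n : ℕ, n₀ ≤ n → ∀ Δ : ℝ, 0 ≤ Δ → Δ ≤ Δ₀ →
        ∀ y : Fin n → ℝ,
          Γ + N - Δ ≤ (∑ i, (y i)^2) / n → (∑ i, (y i)^2) / n ≤ Γ + N + Δ →
          |Real.log (Qcc σ N Γ n y /
              ((2 * π * (Γ + N)) ^ (-(n : ℝ)/2)
                * Real.exp (-(∑ i, (y i)^2) / (2 * (Γ + N)))))|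
            ≤ C * (Real.log n + n * Δ^2) := by
  refine ⟨2 * (Γ / N) * (1 + ((Γ + N) ^ 2)⁻¹), 3, 1, by positivity, by norm_num, one_pos, ?_⟩
  intro n hn Δ _ _ y hlower hupper
  have hlog : 1 ≤ log n := by
    rw [le_log_iff_exp_le (by positivity)]
    exact exp_one_lt_three.le.trans (by exact_mod_cast hn)
  set d := (∑ i, (y i)^2) / n - (Γ + N)
  have hdev : d ^ 2 ≤ Δ ^ 2 := sq_le_sq' (by linarith) (by linarith)
  refine (log_ratio_Qcc_Qstar_bound_general hN hΓ hσ (by lia) y).trans ?_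
  set c := ((Γ + N) ^ 2)⁻¹ with hc
  calc 2 * (Γ / N) * (1 + n * (d / (Γ + N)) ^ 2)
      = 2 * (Γ / N) * (1 + c * (n * d ^ 2)) := by rw [div_pow, hc]; ring
    _ ≤ 2 * (Γ / N) * ((1 + c) * log n + (1 + c) * (n * Δ ^ 2)) := by
        have hc0 : 0 ≤ c := by positivity
        gcongr
        · exact one_le_mul_of_one_le_of_one_le (by linarith) hlog
        · linarith
    _ = 2 * (Γ / N) * (1 + c) * (log n + n * Δ ^ 2) := by ring
end
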